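/- arXiv:1403.7826 — 5 statements merged into one kernel-verified Lean document; each statement's English description precedes it below -/
import Mathlib

section
/- Let n ≥ 2 and let a₁,…,a_n be natural numbers with a₁ ≥ 1 and a_n ≥ 1, and let φ be the associated β-substitution on {1,…,n}. Then φ is primitive: there exists m ≥ 1 such that for all letters i, j ∈ {1,…,n}, the letter j occurs in the word φ^m(i). -/
/-!
The letter graph of the β-substitution (an edge `k → j` when `j` occurs in `φ(k)`) contains the
path `0 → 1 → ⋯ → n-1`, the edge `n-1 → 0` because `a (n-1) ≥ 1`, and the loop `0 → 0` because
`a 0 ≥ 1`. Hence from any `i` one reaches `0` in `n - i` steps, may wait there for arbitrarily many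
steps, and then reaches `j` in `j` steps. Waiting `n + i - j ≥ 0` steps gives a walk of length
exactly `2n` for every pair `(i, j)`, so `m = 2n` works.
-/

/-- Apply a substitution/morphism letterwise to a word. -/
def SubApply {A B : Type*} (φ : A → List B) (w : List A) : List B := w.flatMap φ

/-- The `n`-fold iterate of a substitution, evaluated on a letter. -/
def SubIter {A : Type*} (φ : A → List A) (n : ℕ) (a : A) : List A :=
  (SubApply φ)^[n] [a]

/-- Composition of substitutions: `a ↦ φ(ψ(a))`. -/
def SubComp {A : Type*} (φ ψ : A → List A) : A → List A := fun a => SubApply φ (ψ a)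

/-- A substitution is injective on initial letters. -/
def InjInitial {A : Type*} (φ : A → List A) : Prop :=
  Function.Injective fun a => (φ a).head?

/-- A substitution is constant on final letters. -/
def ConstFinal {A : Type*} (φ : A → List A) : Prop :=
  ∀ a b, (φ a).getLast? = (φ b).getLast?

/-- The β-substitution on the alphabet `Fin n` (letter `k+1` of `{1,…,n}` is index `k`):
`φ(i) = (i+1)·1^{a_i}` for `i < n`, and `φ(n) = 1^{a_n}`. -/
def betaSub {n : ℕ} (a : Fin n → ℕ) : Fin n → List (Fin n) :=
  fun i =>
    if h : (i : ℕ) + 1 < n then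
      ⟨(i : ℕ) + 1, h⟩ :: List.replicate (a i) ⟨0, i.pos⟩
    else
      List.replicate (a i) ⟨0, i.pos⟩

/-- Appending an edge of the letter graph to a walk of length `m`. -/
lemma mem_subIter_succ {A : Type*} {φ : A → List A} {m : ℕ} {i k j : A}
    (hk : k ∈ SubIter φ m i) (hj : j ∈ φ k) : j ∈ SubIter φ (m + 1) i := by
  unfold SubIter at *
  rw [Function.iterate_succ_apply']
  exact List.mem_flatMap.2 ⟨k, hk, hj⟩

lemma mem_subIter_climb {n : ℕ} (a : Fin n → ℕ) {s : ℕ} {i k : Fin n}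
    (hk : k ∈ SubIter (betaSub a) s i) (t : ℕ) (ht : (k : ℕ) + t < n) :
    (⟨k + t, ht⟩ : Fin n) ∈ SubIter (betaSub a) (s + t) i := by
  induction t with
  | zero => exact hk
  | succ t ih =>
    refine mem_subIter_succ (ih (by omega)) ?_
    simp [betaSub, ht, Nat.add_assoc]

/-- The letter of index `0` occurs in `φ(k)` whenever its multiplicity `a k` is positive. -/
lemma zero_mem_betaSub {n : ℕ} (a : Fin n → ℕ) (k : Fin n) (hk : 1 ≤ a k) :
    (⟨0, k.pos⟩ : Fin n) ∈ betaSub a k := by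
  have h : a k ≠ 0 := by omega
  unfold betaSub
  split <;> simp [h]

lemma zero_mem_subIter_add {n : ℕ} (a : Fin n → ℕ) (hn : 0 < n) (h1 : 1 ≤ a ⟨0, hn⟩)
    {s : ℕ} {i : Fin n} (h0 : (⟨0, hn⟩ : Fin n) ∈ SubIter (betaSub a) s i) (t : ℕ) :
    (⟨0, hn⟩ : Fin n) ∈ SubIter (betaSub a) (s + t) i := by
  induction t with
  | zero => exact h0
  | succ t ih => exact mem_subIter_succ ih (zero_mem_betaSub a _ h1)

theorem stmt_5 {n : ℕ} (hn : 2 ≤ n) (a : Fin n → ℕ)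
    (h1 : 1 ≤ a ⟨0, by omega⟩) (hlast : 1 ≤ a ⟨n - 1, by omega⟩) :
    ∃ m, 1 ≤ m ∧ ∀ i j : Fin n, j ∈ SubIter (betaSub a) m i := by
  refine ⟨2 * n, by omega, fun i j => ?_⟩
  have hstart : i ∈ SubIter (betaSub a) 0 i := List.mem_singleton.2 rfl
  have htop : (⟨n - 1, by omega⟩ : Fin n) ∈ SubIter (betaSub a) (n - 1 - i) i := by
    have h := mem_subIter_climb a hstart (n - 1 - i) (by omega)
    have e : (i : ℕ) + (n - 1 - i) = n - 1 := by omega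
    simpa only [e, Nat.zero_add] using h
  have hzero := mem_subIter_succ htop (zero_mem_betaSub a _ hlast)
  have hwait := zero_mem_subIter_add a (by omega) h1 hzero (n + i - j)
  have h := mem_subIter_climb a hwait j (by simp)
  have e : n - 1 - (i : ℕ) + 1 + (n + i - j) + j = 2 * n := by omega
  simpa only [e, Nat.zero_add] using h
end

section
/- Let w = w₁⋯w_k be a nonempty word over {1,2,3} containing at least one occurrence of the letter 3, and let φ = σ^{Brun}_{w₁}∘⋯∘σ^{Brun}_{w_k} be the corresponding product of Brun substitutions. Then φ is injective on initial letters and φ² is constant on final letters; in particular φ is eventually constant on final letters. -/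
/-- The Brun substitutions on `{1,2,3}` (letter `k` is index `k-1` of `Fin 3`):
`σ₁: 1↦1, 2↦2, 3↦32`; `σ₂: 1↦1, 2↦3, 3↦23`; `σ₃: 1↦2, 2↦3, 3↦13`. -/
def brunSub : Fin 3 → Fin 3 → List (Fin 3) :=
  ![![([0] : List (Fin 3)), [1], [2, 1]],
    ![([0] : List (Fin 3)), [2], [1, 2]],
    ![([1] : List (Fin 3)), [2], [0, 2]]]

/-- For `w = w₁⋯w_k`, the product `σ^{Brun}_{w₁}∘⋯∘σ^{Brun}_{w_k}`. -/
def brunWord : List (Fin 3) → Fin 3 → List (Fin 3)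
  | [] => fun j => [j]
  | i :: t => SubComp (brunSub i) (brunWord t)

theorem head?_subApply {A B : Type*} {φ : A → List B} {l : List A} {b : A} {c : B}
    (hl : l.head? = some b) (hb : (φ b).head? = some c) : (SubApply φ l).head? = some c := by
  obtain ⟨t, rfl⟩ := List.head?_eq_some_iff.1 hl
  simp [SubApply, hb]

theorem getLast?_subApply {A B : Type*} {φ : A → List B} {l : List A} {b : A} {c : B}
    (hl : l.getLast? = some b) (hb : (φ b).getLast? = some c) :
    (SubApply φ l).getLast? = some c := by
  obtain ⟨t, rfl⟩ := List.getLast?_eq_some_iff.1 hl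
  simp [SubApply, hb]

/-- The initial letter map of the Brun substitution with index `i`. -/
def brunHeadLetter : Fin 3 → Fin 3 → Fin 3 := ![![0, 1, 2], ![0, 2, 1], ![1, 2, 0]]

/-- The final letter map of the Brun substitution with index `i`. -/
def brunLastLetter : Fin 3 → Fin 3 → Fin 3 := ![![0, 1, 1], ![0, 2, 2], ![1, 2, 2]]

/-- The final letter map of the product of Brun substitutions along a word. -/
def brunLast : List (Fin 3) → Fin 3 → Fin 3
  | [] => id
  | i :: t => brunLastLetter i ∘ brunLast t

theorem exists_injective_head? (w : List (Fin 3)) :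
    ∃ h : Fin 3 → Fin 3, Function.Injective h ∧ ∀ a, (brunWord w a).head? = some (h a) := by
  induction w with
  | nil => exact ⟨id, Function.injective_id, fun a => rfl⟩
  | cons i t ih =>
    obtain ⟨h, hinj, hh⟩ := ih
    have inj : ∀ i, Function.Injective (brunHeadLetter i) := by decide
    have head : ∀ i a, (brunSub i a).head? = some (brunHeadLetter i a) := by decide
    exact ⟨brunHeadLetter i ∘ h, (inj i).comp hinj, fun a => head?_subApply (hh a) (head i _)⟩

theorem getLast?_brunWord (w : List (Fin 3)) (a : Fin 3) :
    (brunWord w a).getLast? = some (brunLast w a) := by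
  induction w with
  | nil => rfl
  | cons i t ih =>
    have last : ∀ i a, (brunSub i a).getLast? = some (brunLastLetter i a) := by decide
    exact getLast?_subApply ih (last i _)

theorem brunLast_of_notMem (w : List (Fin 3)) (h : (2 : Fin 3) ∉ w) :
    brunLast w 0 = 0 ∧ brunLast w 1 ≠ 0 ∧ brunLast w 2 ≠ 0 := by
  induction w with
  | nil => decide
  | cons i t ih =>
    rw [List.mem_cons, not_or] at h
    have key : ∀ i x y z : Fin 3, 2 ≠ i → (x = 0 ∧ y ≠ 0 ∧ z ≠ 0) →
        brunLastLetter i x = 0 ∧ brunLastLetter i y ≠ 0 ∧ brunLastLetter i z ≠ 0 := by decide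
    exact key i _ _ _ h.1 (ih h.2)

/-- If the third Brun substitution occurs, the final letter map is constant or `(1,2,2)`. -/
theorem brunLast_of_mem (w : List (Fin 3)) (h : (2 : Fin 3) ∈ w) :
    (brunLast w 0 = brunLast w 1 ∧ brunLast w 1 = brunLast w 2) ∨
      (brunLast w 0 = 1 ∧ brunLast w 1 = 2 ∧ brunLast w 2 = 2) := by
  induction w with
  | nil => simp at h
  | cons i t ih =>
    by_cases ht : (2 : Fin 3) ∈ t
    · have key : ∀ i x y z : Fin 3, ((x = y ∧ y = z) ∨ (x = 1 ∧ y = 2 ∧ z = 2)) →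
          (brunLastLetter i x = brunLastLetter i y ∧ brunLastLetter i y = brunLastLetter i z) ∨
            (brunLastLetter i x = 1 ∧ brunLastLetter i y = 2 ∧ brunLastLetter i z = 2) := by
        decide
      exact key i _ _ _ (ih ht)
    · obtain rfl : 2 = i := (List.mem_cons.1 h).resolve_right ht
      have key : ∀ x y z : Fin 3, (x = 0 ∧ y ≠ 0 ∧ z ≠ 0) →
          brunLastLetter 2 x = 1 ∧ brunLastLetter 2 y = 2 ∧ brunLastLetter 2 z = 2 := by decide
      exact Or.inr (key _ _ _ (brunLast_of_notMem t ht))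

theorem constFinal_subIter_two (w : List (Fin 3)) (h : (2 : Fin 3) ∈ w) :
    ConstFinal (SubIter (brunWord w) 2) := by
  have last (a : Fin 3) :
      (SubIter (brunWord w) 2 a).getLast? = some (brunLast w (brunLast w a)) :=
    getLast?_subApply (getLast?_subApply (l := [a]) rfl (getLast?_brunWord w a))
      (getLast?_brunWord w _)
  have key : ∀ f : Fin 3 → Fin 3, ((f 0 = f 1 ∧ f 1 = f 2) ∨ (f 0 = 1 ∧ f 1 = 2 ∧ f 2 = 2)) →
      ∀ a, f (f a) = f 2 := by
    intro f hf a
    have const (h01 : f 0 = f 1) (h12 : f 1 = f 2) (b : Fin 3) : f b = f 2 := by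
      fin_cases b <;> simp [h01, h12]
    rcases hf with ⟨h01, h12⟩ | ⟨h0, h1, h2⟩
    · exact const h01 h12 _
    · fin_cases a <;> simp [h0, h1, h2]
  intro a b
  rw [last, last, key _ (brunLast_of_mem w h) a, key _ (brunLast_of_mem w h) b]

theorem stmt_8 (w : List (Fin 3)) (hw : w ≠ []) (h3 : (2 : Fin 3) ∈ w) :
    InjInitial (brunWord w) ∧ ConstFinal (SubIter (brunWord w) 2) ∧
    ∃ m, 1 ≤ m ∧ ConstFinal (SubIter (brunWord w) m) := by
  have hconst := constFinal_subIter_two w h3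
  refine ⟨?_, hconst, 2, one_le_two, hconst⟩
  obtain ⟨h, hinj, hh⟩ := exists_injective_head? w
  intro a b hab
  simp only [hh, Option.some.injEq] at hab
  exact hinj hab
end

section
/- Let n ≥ 1 and let (a₁,b₁),…,(a_n,b_n) be pairs of natural numbers with b_i ≥ 1 for each i, and let φ = σ^{JP}_{a₁,b₁}∘⋯∘σ^{JP}_{a_n,b_n} be the corresponding product of Jacobi–Perron substitutions. Then φ is injective on initial letters, and φ² is constant on final letters: for every letter j ∈ {1,2,3}, the word φ²(j) ends in the letter 3. -/
/-- The Jacobi–Perron substitution `σ^{JP}_{a,b}` on `{1,2,3}` (letter `k` is index `k-1`):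
`1 ↦ 3`, `2 ↦ 1·3^a`, `3 ↦ 2·3^b`. -/
def jpSub (a b : ℕ) : Fin 3 → List (Fin 3) :=
  ![([2] : List (Fin 3)), 0 :: List.replicate a 2, 1 :: List.replicate b 2]

/-- For a list of pairs `(a₁,b₁),…,(a_n,b_n)`, the product
`σ^{JP}_{a₁,b₁}∘⋯∘σ^{JP}_{a_n,b_n}`. -/
def jpWord : List (ℕ × ℕ) → Fin 3 → List (Fin 3)
  | [] => fun j => [j]
  | q :: t => SubComp (jpSub q.1 q.2) (jpWord t)

/-- The initial letter of `φ(w)` is the initial letter of the image of the initial letter of `w`. -/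
lemma head_subApply {A B : Type*} (φ : A → List B) (hφ : ∀ a, φ a ≠ []) (w : List A) :
    (SubApply φ w).head? = w.head?.bind fun a => (φ a).head? := by
  cases w with
  | nil => rfl
  | cons a t => simp [SubApply, List.head?_append_of_ne_nil _ (hφ a)]

/-- The final letter of `φ(w)` is the final letter of the image of the final letter of `w`. -/
lemma getLast_subApply {A B : Type*} (φ : A → List B) (hφ : ∀ a, φ a ≠ []) (w : List A) :
    (SubApply φ w).getLast? = w.getLast?.bind fun a => (φ a).getLast? := by
  induction w using List.reverseRecOn with
  | nil => rfl
  | append_singleton t a _ =>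
    simp [SubApply, List.getLast?_append_of_ne_nil _ (hφ a)]

lemma jpSub_ne_nil (a b : ℕ) (j : Fin 3) : jpSub a b j ≠ [] := by
  fin_cases j <;> simp [jpSub]

/-- On initial letters `jpSub a b` acts as the cyclic permutation `j ↦ j + 2` of `Fin 3`. -/
lemma jpSub_head (a b : ℕ) (j : Fin 3) : (jpSub a b j).head? = some (j + 2) := by
  fin_cases j <;> simp [jpSub]

lemma jpSub_last_zero (a b : ℕ) : (jpSub a b 0).getLast? = some 2 := by
  simp [jpSub]

lemma jpSub_last_one (a b : ℕ) :
    (jpSub a b 1).getLast? = some 0 ∨ (jpSub a b 1).getLast? = some 2 := by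
  rcases Nat.eq_zero_or_pos a with rfl | h
  · simp [jpSub]
  · right
    simp [jpSub, List.getLast?_cons, List.getLast?_replicate, h.ne']

lemma jpSub_last_two (a b : ℕ) (h : 1 ≤ b) : (jpSub a b 2).getLast? = some 2 := by
  simp [jpSub, List.getLast?_cons, List.getLast?_replicate, (show b ≠ 0 by omega)]

lemma jpWord_head (p : List (ℕ × ℕ)) :
    ∃ c : Fin 3, ∀ j, (jpWord p j).head? = some (j + c) := by
  induction p with
  | nil => exact ⟨0, fun j => by simp [jpWord]⟩
  | cons q t ih =>
    obtain ⟨c, hc⟩ := ih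
    refine ⟨c + 2, fun j => ?_⟩
    simp [jpWord, SubComp, head_subApply _ (jpSub_ne_nil _ _), hc, jpSub_head, add_assoc]

lemma jpWord_ne_nil (p : List (ℕ × ℕ)) (j : Fin 3) : jpWord p j ≠ [] := by
  obtain ⟨c, hc⟩ := jpWord_head p
  intro h
  simpa [h] using hc j

lemma jpWord_cons_last (q : ℕ × ℕ) (t : List (ℕ × ℕ)) (j : Fin 3) :
    (jpWord (q :: t) j).getLast? =
      (jpWord t j).getLast?.bind fun a => (jpSub q.1 q.2 a).getLast? :=
  getLast_subApply _ (jpSub_ne_nil _ _) _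

/-- A nonempty product sends the final letters `0` and `2` to `2`, and never produces the final
letter `1`. -/
lemma jpWord_last (p : List (ℕ × ℕ)) (hp : p ≠ []) (hb : ∀ q ∈ p, 1 ≤ q.2) :
    (jpWord p 0).getLast? = some 2 ∧ (jpWord p 2).getLast? = some 2 ∧
    ((jpWord p 1).getLast? = some 0 ∨ (jpWord p 1).getLast? = some 2) := by
  induction p with
  | nil => exact absurd rfl hp
  | cons q t ih =>
    have h0 := jpSub_last_zero q.1 q.2
    have h1 := jpSub_last_one q.1 q.2
    have h2 := jpSub_last_two q.1 q.2 (hb q (by simp))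
    simp only [jpWord_cons_last]
    rcases eq_or_ne t [] with rfl | ht
    · simpa [jpWord, h0, h2] using h1
    · obtain ⟨i0, i2, i1⟩ := ih ht fun r hr => hb r (by simp [hr])
      rcases i1 with i1 | i1 <;> simp [i0, i1, i2, h0, h2]

theorem stmt_9 (p : List (ℕ × ℕ)) (hp : p ≠ []) (hb : ∀ q ∈ p, 1 ≤ q.2) :
    InjInitial (jpWord p) ∧ ConstFinal (SubIter (jpWord p) 2) ∧
    ∀ j : Fin 3, (SubIter (jpWord p) 2 j).getLast? = some 2 := by
  have key : ∀ j : Fin 3, (SubIter (jpWord p) 2 j).getLast? = some 2 := by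
    intro j
    obtain ⟨h0, h2, h1⟩ := jpWord_last p hp hb
    have e : (SubIter (jpWord p) 2 j).getLast? =
        (jpWord p j).getLast?.bind fun a => (jpWord p a).getLast? := by
      simp [SubIter, getLast_subApply _ (jpWord_ne_nil p)]
    rw [e]
    fin_cases j
    · simp [h0, h2]
    · rcases h1 with h1 | h1 <;> simp [h0, h1, h2]
    · simp [h2]
  refine ⟨fun i j hij => ?_, fun i j => by rw [key, key], key⟩
  obtain ⟨c, hc⟩ := jpWord_head p
  simpa [hc] using hij
end

section
/- Let A and B be finite alphabets, let φ be a substitution on A, ψ a substitution on B, and α a morphism from A to B that intertwines φ and ψ (i.e., α(φ(a)) = ψ(α(a)) for every a ∈ A). Suppose φ is injective on initial letters and every letter of B occurs as the first letter of α(a) for some a ∈ A. Then there exists n ≥ 1 such that ψⁿ(k) begins with the letter k for every k ∈ B; in particular ψ is injective on initial letters. -/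
/-- The first letter of the image of a word depends only on the first letter of that word. -/
lemma head?_subApply_s12 {A B : Type*} {φ : A → List B} {f : A → B}
    (hf : ∀ a, (φ a).head? = some (f a)) (w : List A) :
    (SubApply φ w).head? = w.head?.map f := by
  cases w with
  | nil => rfl
  | cons a w => simp [SubApply, List.head?_append, hf]

lemma head?_subIter {A : Type*} {φ : A → List A} {f : A → A}
    (hf : ∀ a, (φ a).head? = some (f a)) (n : ℕ) (a : A) :
    (SubIter φ n a).head? = some (f^[n] a) := by
  unfold SubIter
  induction n with
  | zero => rfl
  | succ n ih =>
    rw [Function.iterate_succ_apply', head?_subApply_s12 hf, ih, Function.iterate_succ_apply',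
      Option.map_some]

theorem stmt_12 {A B : Type*} [Fintype A] [Fintype B]
    (φ : A → List A) (ψ : B → List B) (α : A → List B)
    (hφ : ∀ a, φ a ≠ []) (hψ : ∀ b, ψ b ≠ []) (hα : ∀ a, α a ≠ [])
    (hint : ∀ a, SubApply α (φ a) = SubApply ψ (α a))
    (hinj : InjInitial φ)
    (hsurj : ∀ k : B, ∃ a : A, (α a).head? = some k) :
    (∃ n, 1 ≤ n ∧ ∀ k : B, (SubIter ψ n k).head? = some k) ∧ InjInitial ψ := by
  choose f hf using fun a => Option.ne_none_iff_exists'.1 (mt List.head?_eq_none_iff.1 (hφ a))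
  choose g hg using fun b => Option.ne_none_iff_exists'.1 (mt List.head?_eq_none_iff.1 (hψ b))
  choose p hp using fun a => Option.ne_none_iff_exists'.1 (mt List.head?_eq_none_iff.1 (hα a))
  have hcomm : p ∘ f = g ∘ p := by
    funext a
    have h := congrArg List.head? (hint a)
    rw [head?_subApply_s12 hp, head?_subApply_s12 hg, hf, hp] at h
    simpa using h
  have hfsurj : Function.Surjective f :=
    Finite.surjective_of_injective fun a b hab => hinj (by simp [hf, hab])
  have hpsurj : Function.Surjective p := fun k => by
    obtain ⟨a, ha⟩ := hsurj k
    exact ⟨a, Option.some_injective _ ((hp a).symm.trans ha)⟩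
  have hgsurj : Function.Surjective g :=
    Function.Surjective.of_comp (g := p) (hcomm ▸ hpsurj.comp hfsurj)
  have hginj : Function.Injective g := Finite.injective_iff_surjective.2 hgsurj
  refine ⟨?_, fun a b hab => hginj (by simpa [hg] using hab)⟩
  let e : Equiv.Perm B := Equiv.ofBijective g ⟨hginj, hgsurj⟩
  refine ⟨orderOf e, orderOf_pos e, fun k => ?_⟩
  have h : (e ^ orderOf e) k = k := by rw [pow_orderOf_eq_one, Equiv.Perm.one_apply]
  rw [Equiv.Perm.coe_pow] at h
  rw [head?_subIter hg]
  exact congrArg some h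
end

section
/- Let φ be a substitution on a finite alphabet A that is constant on final letters, with common final letter c (so φ(a) ends in c for every a ∈ A). Let A' := {a ∈ A : a occurs in φⁿ(c) for some n ≥ 1}. Then: (i) c ∈ A'; (ii) for every a ∈ A', every letter of the word φ(a) belongs to A', so φ restricts to a substitution φ' on the alphabet A'; and (iii) φ' is primitive: there exists m ≥ 1 such that for all a, a' ∈ A', the letter a' occurs in the word φ^m(a). -/
/-- The set of letters occurring in some `φⁿ(c)`, `n ≥ 1`. -/
def ReachSet {A : Type*} (φ : A → List A) (c : A) : Set A :=
  {a | ∃ n, 1 ≤ n ∧ a ∈ SubIter φ n c}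

theorem mem_subIter_succ_s13 {A : Type*} (φ : A → List A) (n : ℕ) (a b : A) :
    b ∈ SubIter φ (n + 1) a ↔ ∃ x ∈ SubIter φ n a, b ∈ φ x := by
  simp only [SubIter, Function.iterate_succ_apply']
  simp [SubApply]

/-- Expands the innermost application of `φ`, where `mem_subIter_succ` expands the outermost. -/
theorem mem_subIter_succ_of_mem {A : Type*} (φ : A → List A) {a x : A} (hx : x ∈ φ a) (n : ℕ) :
    ∀ b ∈ SubIter φ n x, b ∈ SubIter φ (n + 1) a := by
  induction n with
  | zero =>
    intro b hb
    obtain rfl : b = x := by simpa [SubIter] using hb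
    simpa [SubIter, SubApply] using hx
  | succ n ih =>
    intro b hb
    obtain ⟨y, hy, hby⟩ := (mem_subIter_succ_s13 φ n x b).1 hb
    exact (mem_subIter_succ_s13 φ (n + 1) a b).2 ⟨y, ih y hy, hby⟩

theorem mem_subIter_mono {A : Type*} (φ : A → List A) {c : A} (hc : c ∈ φ c) {n m : ℕ}
    (h : n ≤ m) {b : A} (hb : b ∈ SubIter φ n c) : b ∈ SubIter φ m c := by
  induction m, h using Nat.le_induction with
  | base => exact hb
  | succ m _ ih => exact mem_subIter_succ_of_mem φ hc m b ih

theorem stmt_13 {A : Type*} [Fintype A] (φ : A → List A) (hφ : ∀ a, φ a ≠ [])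
    (c : A) (hc : ∀ a, (φ a).getLast? = some c) :
    c ∈ ReachSet φ c ∧
    (∀ a ∈ ReachSet φ c, ∀ b ∈ φ a, b ∈ ReachSet φ c) ∧
    (∃ m, 1 ≤ m ∧ ∀ a ∈ ReachSet φ c, ∀ a' ∈ ReachSet φ c, a' ∈ SubIter φ m a) := by
  have hmem : ∀ a, c ∈ φ a := fun a => List.mem_of_getLast? (hc a)
  refine ⟨⟨1, le_rfl, by simpa [SubIter, SubApply] using hmem c⟩, ?_, ?_⟩
  · rintro a ⟨n, hn, ha⟩ b hb
    exact ⟨n + 1, by omega, (mem_subIter_succ_s13 φ n c b).2 ⟨a, ha, hb⟩⟩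
  · have hlevel : ∀ b, ∃ n, b ∈ ReachSet φ c → b ∈ SubIter φ n c := by
      intro b
      by_cases hb : b ∈ ReachSet φ c
      · obtain ⟨n, -, hn⟩ := hb
        exact ⟨n, fun _ => hn⟩
      · exact ⟨0, fun h => absurd h hb⟩
    -- `f b` is a level at which `b` appears, of no significance for letters outside `ReachSet φ c`.
    choose f hf using hlevel
    refine ⟨Finset.univ.sup f + 1, by omega, fun a _ a' ha' => ?_⟩
    exact mem_subIter_succ_of_mem φ (hmem a) _ a'
      (mem_subIter_mono φ (hmem c) (Finset.le_sup (Finset.mem_univ a')) (hf a' ha'))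
end
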